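/- Let t₁, …, t_m be a finite list of transactions that are pairwise non-conflicting (for all i ≠ j, W(t_i) ∩ (R(t_j) ∪ W(t_j)) = ∅). Then the result of applying all of them in sequence to any initial database state is independent of the order: for every permutation of the list, the composition of the corresponding update functions yields the same final state. Hence the pairwise conflict-free set of transactions committed in Styx's lock-free phase can be committed in any order—in particular concurrently across workers—with a uniquely determined, serializable outcome. -/

import Mathlib

/-- A transaction over a database state `K → V`: a finite read set, a finite write set, and an
update function that (i) leaves every key outside the write set unchanged and (ii) writes values
that depend only on the values of the keys in the read set. -/
structure Txn (K V : Type*) where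
  R : Finset K
  W : Finset K
  apply : (K → V) → (K → V)
  frame : ∀ (s : K → V) (k : K), k ∉ W → apply s k = s k
  reads : ∀ (s s' : K → V), (∀ k ∈ R, s k = s' k) → ∀ k ∈ W, apply s k = apply s' k

/-- Let `t₁, …, t_m` be a finite list of pairwise non-conflicting transactions
(for all `i ≠ j`, `W(t_i) ∩ (R(t_j) ∪ W(t_j)) = ∅`).  Then the result of applying all of them in
sequence to any initial database state is independent of the order: for every permutation of the
list, applying the transactions in that order yields the same final state. -/
theorem pairwise_nonconflicting_order_independent {K V : Type*} [DecidableEq K]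
    (ts : List (Txn K V))
    (hpair : ∀ i j : Fin ts.length, i ≠ j →
      (ts.get i).W ∩ ((ts.get j).R ∪ (ts.get j).W) = ∅) :
    ∀ ts' : List (Txn K V), ts.Perm ts' →
      ∀ s : K → V,
        ts.foldl (fun st t => t.apply st) s = ts'.foldl (fun st t => t.apply st) s := by
  intro ts' hp s
  refine hp.foldl_eq' ?_ s
  intro x hx y hy z
  obtain ⟨i, rfl⟩ := List.get_of_mem hx
  obtain ⟨j, rfl⟩ := List.get_of_mem hy
  by_cases hij : i = j
  · subst hij; rfl
  have h1 := hpair i j hij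
  have h2 := hpair j i (Ne.symm hij)
  generalize ts.get i = a at *
  generalize ts.get j = b at *
  have d1 : ∀ k ∈ a.W, k ∉ b.R ∧ k ∉ b.W := by
    intro k hk
    have := Finset.eq_empty_iff_forall_notMem.mp h1 k
    simp only [Finset.mem_inter, Finset.mem_union] at this
    tauto
  have d2 : ∀ k ∈ b.W, k ∉ a.R ∧ k ∉ a.W := by
    intro k hk
    have := Finset.eq_empty_iff_forall_notMem.mp h2 k
    simp only [Finset.mem_inter, Finset.mem_union] at this
    tauto
  funext k
  change b.apply (a.apply z) k = a.apply (b.apply z) k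
  by_cases hb : k ∈ b.W
  · rw [a.frame _ k (d2 k hb).2]
    exact b.reads _ _ (fun r hr => a.frame _ r (fun h => (d1 r h).1 hr)) k hb
  · rw [b.frame _ k hb]
    by_cases ha : k ∈ a.W
    · exact (a.reads _ _ (fun r hr => b.frame _ r (fun h => (d2 r h).1 hr)) k ha).symm
    · rw [a.frame _ k ha, a.frame _ k ha, b.frame _ k hb]
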